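/- arXiv:1110.2403 — 8 statements merged into one kernel-verified Lean document; each statement's English description precedes it below -/
import Mathlib

section
/- Let A, B, C ∈ ℝ and let f : ℝ → ℝ be three times continuously differentiable with (A + B·f + C·f²)·f′ + f‴ = 0 on ℝ. Suppose there is f₀ ≠ 0 such that f(ξ) → f₀ as ξ → +∞, f(ξ) → −f₀ as ξ → −∞, and f′(ξ) → 0, f″(ξ) → 0 as ξ → ±∞. Then necessarily B = 0 and 3·A = −C·f₀². -/
/-!
Write the equation as `V''(f) f' + f''' = 0` with `V` a quartic. It has two first integrals,
`V'(f) + f''` and then, with `K` the value of the first one, the energy `V(f) + f'² / 2 - K f`.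
Evaluating both at `±∞` shows that the graph of `V` has the same tangent line at the two end states
`a` and `b`. Equality of the slopes is one linear relation between `A`, `B` and `C`; equality of the
intercepts says that the trapezoidal rule for `∫ V'` over `[b, a]` is exact, and since `V'` is cubic
this means that `V'''` vanishes at the midpoint `(a + b) / 2`.
-/

open Filter Topology

theorem eq_of_hasDerivAt_zero_of_tendsto {𝕜 E : Type*} [RCLike 𝕜] [NormedAddCommGroup E]
    [NormedSpace 𝕜 E] {g : 𝕜 → E} {l : Filter 𝕜} [l.NeBot] {a : E}
    (hg : ∀ x, HasDerivAt g 0 x) (hlim : Tendsto g l (𝓝 a)) (x : 𝕜) : g x = a := by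
  have hconst (y : 𝕜) : g y = g x :=
    is_const_of_deriv_eq_zero (fun z => (hg z).differentiableAt) (fun z => (hg z).deriv) y x
  exact tendsto_const_nhds_iff.mp (hlim.congr hconst)

section FirstIntegrals

variable {𝕜 : Type*} [RCLike 𝕜] {V V' V'' : 𝕜 → 𝕜} {f f' f'' f''' : ℝ → 𝕜}
  {l : Filter ℝ} [l.NeBot] {a : 𝕜}

theorem firstIntegral_eq_of_tendsto (hV' : ∀ u, HasDerivAt V' (V'' u) u)
    (hf : ∀ x, HasDerivAt f (f' x) x) (hf'' : ∀ x, HasDerivAt f'' (f''' x) x)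
    (hode : ∀ x, V'' (f x) * f' x + f''' x = 0)
    (hlim : Tendsto f l (𝓝 a)) (hlim'' : Tendsto f'' l (𝓝 0)) (x : ℝ) :
    V' (f x) + f'' x = V' a := by
  have hderiv (y : ℝ) : HasDerivAt (fun z => V' (f z) + f'' z) 0 y :=
    (((hV' (f y)).comp y (hf y)).add (hf'' y)).congr_deriv (hode y)
  have htendsto : Tendsto (fun z => V' (f z) + f'' z) l (𝓝 (V' a)) := by
    simpa using ((hV' a).continuousAt.tendsto.comp hlim).add hlim''
  exact eq_of_hasDerivAt_zero_of_tendsto hderiv htendsto x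

theorem energy_eq_of_tendsto {K : 𝕜} (hV : ∀ u, HasDerivAt V (V' u) u)
    (hf : ∀ x, HasDerivAt f (f' x) x) (hf' : ∀ x, HasDerivAt f' (f'' x) x)
    (hK : ∀ x, V' (f x) + f'' x = K)
    (hlim : Tendsto f l (𝓝 a)) (hlim' : Tendsto f' l (𝓝 0)) (x : ℝ) :
    V (f x) + f' x ^ 2 / 2 - K * f x = V a - K * a := by
  have hderiv (y : ℝ) : HasDerivAt (fun z => V (f z) + f' z ^ 2 / 2 - K * f z) 0 y := by
    have hpotential : HasDerivAt (fun z => V (f z)) (V' (f y) * f' y) y :=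
      (hV (f y)).comp y (hf y)
    have hkinetic : HasDerivAt (fun z => f' z ^ 2 / 2) (f' y * f'' y) y :=
      (((hf' y).pow 2).div_const 2).congr_deriv (by push_cast; ring)
    refine ((hpotential.add hkinetic).sub ((hf y).const_mul K)).congr_deriv ?_
    linear_combination f' y * hK y
  have htendsto : Tendsto (fun z => V (f z) + f' z ^ 2 / 2 - K * f z) l (𝓝 (V a - K * a)) := by
    simpa using (((hV a).continuousAt.tendsto.comp hlim).add ((hlim'.pow 2).div_const 2)).sub
      (hlim.const_mul K)
  exact eq_of_hasDerivAt_zero_of_tendsto hderiv htendsto x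

theorem common_tangent_of_tendsto {m : Filter ℝ} [m.NeBot] {b : 𝕜}
    (hV : ∀ u, HasDerivAt V (V' u) u) (hV' : ∀ u, HasDerivAt V' (V'' u) u)
    (hf : ∀ x, HasDerivAt f (f' x) x) (hf' : ∀ x, HasDerivAt f' (f'' x) x)
    (hf'' : ∀ x, HasDerivAt f'' (f''' x) x) (hode : ∀ x, V'' (f x) * f' x + f''' x = 0)
    (ha : Tendsto f l (𝓝 a)) (ha' : Tendsto f' l (𝓝 0)) (ha'' : Tendsto f'' l (𝓝 0))
    (hb : Tendsto f m (𝓝 b)) (hb' : Tendsto f' m (𝓝 0)) (hb'' : Tendsto f'' m (𝓝 0)) :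
    V' a = V' b ∧ V a - V b = V' a * (a - b) := by
  have hKa := firstIntegral_eq_of_tendsto hV' hf hf'' hode ha ha''
  have hKb := firstIntegral_eq_of_tendsto hV' hf hf'' hode hb hb''
  have hintercept : V a - V' a * a = V b - V' a * b :=
    (energy_eq_of_tendsto hV hf hf' hKa ha ha' 0).symm.trans
      (energy_eq_of_tendsto hV hf hf' hKa hb hb' 0)
  exact ⟨(hKa 0).symm.trans (hKb 0), by linear_combination hintercept⟩

end FirstIntegrals

section Potential

variable {𝕜 : Type*} [RCLike 𝕜]

/-- The potential of the reduced complex mKdV equation: the second antiderivative, vanishing to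
second order at `0`, of the coefficient `A + B u + C u²`. -/
def mkdvPotential (A B C u : 𝕜) : 𝕜 :=
  A / 2 * u ^ 2 + B / 6 * u ^ 3 + C / 12 * u ^ 4

/-- The flux of the reduced complex mKdV equation: the derivative in `u` of its potential. The
equation says that `mkdvFlux A B C (f ξ) + f'' ξ` does not depend on `ξ`. -/
def mkdvFlux (A B C u : 𝕜) : 𝕜 :=
  A * u + B / 2 * u ^ 2 + C / 3 * u ^ 3

theorem hasDerivAt_mkdvPotential (A B C u : 𝕜) :
    HasDerivAt (mkdvPotential A B C) (mkdvFlux A B C u) u := by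
  refine ((((hasDerivAt_pow 2 u).const_mul (A / 2)).add
    ((hasDerivAt_pow 3 u).const_mul (B / 6))).add
    ((hasDerivAt_pow 4 u).const_mul (C / 12))).congr_deriv ?_
  simp only [mkdvFlux]
  push_cast
  ring

theorem hasDerivAt_mkdvFlux (A B C u : 𝕜) :
    HasDerivAt (mkdvFlux A B C) (A + B * u + C * u ^ 2) u := by
  refine ((((hasDerivAt_id u).const_mul A).add ((hasDerivAt_pow 2 u).const_mul (B / 2))).add
    ((hasDerivAt_pow 3 u).const_mul (C / 3))).congr_deriv ?_
  push_cast
  ring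

theorem mkdvFlux_sub (A B C a b : 𝕜) :
    mkdvFlux A B C a - mkdvFlux A B C b =
      (a - b) * (A + B / 2 * (a + b) + C / 3 * (a ^ 2 + a * b + b ^ 2)) := by
  simp only [mkdvFlux]
  ring

theorem mkdvPotential_sub_sub_trapezoid (A B C a b : 𝕜) :
    mkdvPotential A B C a - mkdvPotential A B C b -
        (mkdvFlux A B C a + mkdvFlux A B C b) / 2 * (a - b) =
      -(a - b) ^ 3 / 12 * (B + C * (a + b)) := by
  simp only [mkdvPotential, mkdvFlux]
  ring

theorem coeff_eq_of_mkdvPotential_common_tangent {A B C a b : 𝕜} (hab : a ≠ b)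
    (hslope : mkdvFlux A B C a = mkdvFlux A B C b)
    (htangent : mkdvPotential A B C a - mkdvPotential A B C b = mkdvFlux A B C a * (a - b)) :
    B = -C * (a + b) ∧ 6 * A = C * (a ^ 2 + 4 * a * b + b ^ 2) := by
  have hne : a - b ≠ 0 := sub_ne_zero.mpr hab
  have hchord : A + B / 2 * (a + b) + C / 3 * (a ^ 2 + a * b + b ^ 2) = 0 :=
    (mul_eq_zero.mp ((mkdvFlux_sub A B C a b).symm.trans (sub_eq_zero.mpr hslope))).resolve_left hne
  have htrapezoid : (a - b) ^ 3 * (B + C * (a + b)) = 0 := by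
    linear_combination 12 * mkdvPotential_sub_sub_trapezoid A B C a b - 12 * htangent
      - 6 * (a - b) * hslope
  have hmidpoint : B + C * (a + b) = 0 :=
    (mul_eq_zero.mp htrapezoid).resolve_left (pow_ne_zero 3 hne)
  constructor
  · linear_combination hmidpoint
  · linear_combination 6 * hchord - 3 * (a + b) * hmidpoint

end Potential

theorem stmt4_general {𝕜 : Type*} [RCLike 𝕜] (A B C : 𝕜) (f : ℝ → 𝕜) (hf : ContDiff ℝ 3 f)
    (hode : ∀ ξ : ℝ,
      (A + B * f ξ + C * (f ξ) ^ 2) * deriv f ξ + deriv (deriv (deriv f)) ξ = 0)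
    (a b : 𝕜) (hab : a ≠ b)
    (htop : Tendsto f atTop (𝓝 a)) (hbot : Tendsto f atBot (𝓝 b))
    (h1top : Tendsto (deriv f) atTop (𝓝 0)) (h1bot : Tendsto (deriv f) atBot (𝓝 0))
    (h2top : Tendsto (deriv (deriv f)) atTop (𝓝 0))
    (h2bot : Tendsto (deriv (deriv f)) atBot (𝓝 0)) :
    B = -C * (a + b) ∧ 6 * A = C * (a ^ 2 + 4 * a * b + b ^ 2) := by
  have hf' : ContDiff ℝ 2 (deriv f) := ContDiff.deriv' hf
  have hd (x : ℝ) : HasDerivAt f (deriv f x) x :=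
    (hf.differentiable (by norm_num) x).hasDerivAt
  have hd' (x : ℝ) : HasDerivAt (deriv f) (deriv (deriv f) x) x :=
    (hf'.differentiable (by norm_num) x).hasDerivAt
  have hd'' (x : ℝ) : HasDerivAt (deriv (deriv f)) (deriv (deriv (deriv f)) x) x :=
    (hf'.differentiable_deriv_two x).hasDerivAt
  obtain ⟨hslope, htangent⟩ :=
    common_tangent_of_tendsto (hasDerivAt_mkdvPotential A B C) (hasDerivAt_mkdvFlux A B C)
      hd hd' hd'' hode htop h1top h2top hbot h1bot h2bot
  exact coeff_eq_of_mkdvPotential_common_tangent hab hslope htangent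

/-- If `f` is `C³` on `ℝ`, satisfies `(A + B·f + C·f²)·f′ + f‴ = 0`,
with kink boundary conditions `f → ±f₀ ≠ 0` as `ξ → ±∞` and `f′, f″ → 0` at `±∞`,
then `B = 0` and `3A = −C·f₀²`. -/
theorem stmt4 (A B C : ℝ) (f : ℝ → ℝ) (hf : ContDiff ℝ 3 f)
    (hode : ∀ ξ : ℝ,
      (A + B * f ξ + C * (f ξ) ^ 2) * deriv f ξ + deriv (deriv (deriv f)) ξ = 0)
    (f₀ : ℝ) (hf₀ : f₀ ≠ 0)
    (htop : Filter.Tendsto f Filter.atTop (nhds f₀))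
    (hbot : Filter.Tendsto f Filter.atBot (nhds (-f₀)))
    (h1top : Filter.Tendsto (deriv f) Filter.atTop (nhds 0))
    (h1bot : Filter.Tendsto (deriv f) Filter.atBot (nhds 0))
    (h2top : Filter.Tendsto (deriv (deriv f)) Filter.atTop (nhds 0))
    (h2bot : Filter.Tendsto (deriv (deriv f)) Filter.atBot (nhds 0)) :
    B = 0 ∧ 3 * A = -C * f₀ ^ 2 := by
  have ⟨hB, hA⟩ := stmt4_general A B C f hf hode f₀ (-f₀) (self_ne_neg.mpr hf₀)
    htop hbot h1top h1bot h2top h2bot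
  exact ⟨by linear_combination hB, by linear_combination hA / 2⟩
end

section
/- Let α > 0 be real, β = 0, c > 0, and let Θ ∈ ℝ, θ ∈ [0, 2π), φ ∈ [0, 2π). Then the function u(t,x) = e^{iφ}·√(c/α)·( e^{iθ}·tanh Θ + 6·sech Θ / ( 2·cos θ·sinh Θ + √(6 + 4·cos²θ·sinh²Θ)·cosh(√c·(x − c·t)·sech Θ) ) ) is smooth on ℝ×ℝ (the denominator never vanishes) and satisfies the complex mKdV equation u_t + α·conj(u)·u·u_x + u_xxx = 0 at every point (t,x) ∈ ℝ×ℝ. -/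
/-- Left-hand side of the complex mKdV equation (γ = 1):
`u_t + α·conj(u)·u·u_x + β·u²·conj(u)_x + u_xxx`. -/
noncomputable def mkdvLHS (α β : ℂ) (u : ℝ → ℝ → ℂ) (t x : ℝ) : ℂ :=
  deriv (fun s => u s x) t
    + α * (starRingEnd ℂ) (u t x) * u t x * deriv (u t) x
    + β * (u t x) ^ 2 * deriv (fun y => (starRingEnd ℂ) (u t y)) x
    + deriv (deriv (deriv (u t))) x

/-- Hyperbolic secant. -/
noncomputable def sech (x : ℝ) : ℝ := 1 / Real.cosh x

/-!
A travelling wave `u(t, x) = w(x - c t)` turns the equation into a third order ODE for `w`. When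
`β = 0` and `w = K (E + f)` with `f` real and `α |K|² = c`, the nonlinearity is
`α |w|² w' = c |E + f|² w'`, so the constant phase of `K` drops out and what remains is the real
equation `f''' = c (1 - |E + f|²) f'`. Since `|E + f|² = |E|² + 2 (Re E) f + f²`, this is the
derivative of `f'' = c ((1 - |E|²) f - (Re E) f² - f³ / 3)`. A reciprocal
`r = 1 / (a + b cosh (k y))` satisfies `r'' = k² (r - 3 a r² - 2 (b² - a²) r³)`, and the constants
of the solitary wave are those for which a multiple of `r` solves the second order ODE.
-/

open Real ComplexConjugate

theorem deriv_ofReal_comp (f : ℝ → ℝ) :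
    deriv (fun y => (f y : ℂ)) = fun y => ((deriv f y : ℝ) : ℂ) := by
  funext y
  by_cases hf : DifferentiableAt ℝ f y
  · exact hf.hasDerivAt.ofReal_comp.deriv
  · have hf' : ¬DifferentiableAt ℝ (fun y => (f y : ℂ)) y := fun h =>
      hf (Complex.reCLM.differentiableAt.comp y h)
    rw [deriv_zero_of_not_differentiableAt hf, deriv_zero_of_not_differentiableAt hf',
      Complex.ofReal_zero]

/-- The wave of profile `w` travelling to the right with velocity `c`, as a function of time and
position; the ansatz that reduces the complex mKdV equation to an ODE. -/
def travelingWave (c : ℝ) (w : ℝ → ℂ) (t x : ℝ) : ℂ := w (x - c * t)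

theorem contDiff_uncurry_travelingWave {n : WithTop ℕ∞} (c : ℝ) {w : ℝ → ℂ}
    (hw : ContDiff ℝ n w) : ContDiff ℝ n (Function.uncurry (travelingWave c w)) :=
  hw.comp (f := fun p : ℝ × ℝ => p.2 - c * p.1) (by fun_prop)

theorem deriv_travelingWave (c : ℝ) (w : ℝ → ℂ) (t : ℝ) :
    deriv (travelingWave c w t) = travelingWave c (deriv w) t :=
  funext fun _ => deriv_comp_sub_const _ _ _

theorem deriv_travelingWave_time (c : ℝ) (w : ℝ → ℂ) (t x : ℝ) :
    deriv (fun s => travelingWave c w s x) t = -c * travelingWave c (deriv w) t x := by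
  have h := deriv_comp_mul_left c (fun r => w (x - r)) t
  rw [deriv_comp_const_sub] at h
  simpa [travelingWave] using h

theorem mkdvLHS_travelingWave (α β : ℂ) (c : ℝ) (w : ℝ → ℂ) (t x : ℝ) :
    mkdvLHS α β (travelingWave c w) t x =
      travelingWave c (fun y => -c * deriv w y + α * conj (w y) * w y * deriv w y
        + β * w y ^ 2 * conj (deriv w y) + deriv (deriv (deriv w)) y) t x := by
  have hconj : deriv (fun y => conj (travelingWave c w t y)) x
      = conj (deriv (travelingWave c w t) x) := deriv.star
  rw [mkdvLHS, hconj, deriv_travelingWave_time]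
  simp only [deriv_travelingWave]
  rfl

theorem normSq_add_ofReal (E : ℂ) (r : ℝ) :
    Complex.normSq (E + r) = Complex.normSq E + 2 * E.re * r + r ^ 2 := by
  rw [Complex.normSq_add, Complex.normSq_ofReal, Complex.conj_ofReal, Complex.re_mul_ofReal]
  ring

theorem deriv_deriv_deriv_eq_of_cubic_ode {f : ℝ → ℝ} {c : ℝ} {E : ℂ}
    (hf : Differentiable ℝ f)
    (hode : ∀ y, deriv (deriv f) y
      = c * ((1 - Complex.normSq E) * f y - E.re * f y ^ 2 - f y ^ 3 / 3)) (y : ℝ) :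
    deriv (deriv (deriv f)) y = c * (1 - Complex.normSq (E + f y)) * deriv f y := by
  have hfy := (hf y).hasDerivAt
  have hcubic := (((hfy.const_mul (1 - Complex.normSq E)).sub
    ((hfy.fun_pow 2).const_mul E.re)).sub ((hfy.fun_pow 3).div_const 3)).const_mul c
  rw [funext hode, normSq_add_ofReal]
  refine hcubic.deriv.trans ?_
  push_cast
  ring

theorem mkdvLHS_travelingWave_eq_zero_of_cubic_ode {α c : ℝ} {K E : ℂ} {f : ℝ → ℝ}
    (hK : α * Complex.normSq K = c) (hf : Differentiable ℝ f)
    (hode : ∀ y, deriv (deriv f) y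
      = c * ((1 - Complex.normSq E) * f y - E.re * f y ^ 2 - f y ^ 3 / 3)) (t x : ℝ) :
    mkdvLHS α 0 (travelingWave c fun y => K * (E + f y)) t x = 0 := by
  have hmod (y : ℝ) : (α : ℂ) * conj (K * (E + f y)) * (K * (E + f y))
      = c * Complex.normSq (E + f y) := by
    rw [mul_assoc, ← Complex.normSq_eq_conj_mul_self, Complex.normSq_mul, ← hK]
    push_cast
    ring
  rw [mkdvLHS_travelingWave, travelingWave]
  simp only [hmod, deriv_const_mul_field', deriv_const_add', deriv_ofReal_comp,
    deriv_deriv_deriv_eq_of_cubic_ode hf hode]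
  push_cast
  ring

section RecipAddCosh

/-- The reciprocal of a shifted hyperbolic cosine, `y ↦ 1 / (a + b cosh (k y))`; its multiples are
the localized parts of the solitary waves. -/
noncomputable def recipAddCosh (a b k y : ℝ) : ℝ := (a + b * cosh (k * y))⁻¹

variable {a b k : ℝ}

theorem add_mul_cosh_pos (hb : 0 ≤ b) (hab : 0 < a + b) (z : ℝ) : 0 < a + b * cosh z := by
  have hcosh : b ≤ b * cosh z := le_mul_of_one_le_right hb (one_le_cosh z)
  linarith

theorem contDiff_recipAddCosh {n : WithTop ℕ∞} (h : ∀ y, a + b * cosh (k * y) ≠ 0) :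
    ContDiff ℝ n (recipAddCosh a b k) :=
  ContDiff.inv (by fun_prop) h

theorem hasDerivAt_recipAddCosh {y : ℝ} (h : a + b * cosh (k * y) ≠ 0) :
    HasDerivAt (recipAddCosh a b k) (-(b * k * sinh (k * y)) * recipAddCosh a b k y ^ 2) y := by
  have hden := ((((hasDerivAt_id' y).const_mul k).cosh).const_mul b).const_add a
  refine (hden.fun_inv h).congr_deriv ?_
  rw [recipAddCosh, inv_pow]
  ring

theorem deriv_deriv_recipAddCosh (h : ∀ y, a + b * cosh (k * y) ≠ 0) (y : ℝ) :
    deriv (deriv (recipAddCosh a b k)) y = k ^ 2 * (recipAddCosh a b k y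
      - 3 * a * recipAddCosh a b k y ^ 2 - 2 * (b ^ 2 - a ^ 2) * recipAddCosh a b k y ^ 3) := by
  have hslope := ((((hasDerivAt_id' y).const_mul k).sinh).const_mul (b * k)).fun_neg
  have hprod := hslope.fun_mul ((hasDerivAt_recipAddCosh (h y)).fun_pow 2)
  have hr : (a + b * cosh (k * y)) * recipAddCosh a b k y = 1 := mul_inv_cancel₀ (h y)
  rw [funext fun y => (hasDerivAt_recipAddCosh (h y)).deriv]
  refine hprod.deriv.trans ?_
  generalize recipAddCosh a b k y = r at hr ⊢
  have hsinh := sinh_sq (k * y)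
  push_cast
  linear_combination (k ^ 2 * r + 2 * k ^ 2 * r ^ 2 * (b * cosh (k * y) - a)) * hr
    + 2 * b ^ 2 * k ^ 2 * r ^ 3 * hsinh

end RecipAddCosh

/-- The localized part `6 S / (a + √(6 + a²) cosh (√c S y))` of the solitary wave of velocity `c`
over a constant background `E` with `S² = 1 - |E|²` and `a S = 2 Re E`. -/
noncomputable def solitaryProfile (c S a y : ℝ) : ℝ :=
  6 * S * recipAddCosh a (√(6 + a ^ 2)) (√c * S) y

theorem add_sqrt_mul_cosh_pos (a z : ℝ) : 0 < a + √(6 + a ^ 2) * cosh z := by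
  have ha : -a < √(6 + a ^ 2) := lt_sqrt_of_sq_lt (by rw [neg_sq]; linarith)
  exact add_mul_cosh_pos (sqrt_nonneg _) (by linarith) z

theorem contDiff_solitaryProfile {n : WithTop ℕ∞} (c S a : ℝ) :
    ContDiff ℝ n (solitaryProfile c S a) :=
  contDiff_const.mul (contDiff_recipAddCosh fun _ => (add_sqrt_mul_cosh_pos a _).ne')

theorem deriv_deriv_solitaryProfile {c : ℝ} (hc : 0 ≤ c) (S a y : ℝ) :
    deriv (deriv (solitaryProfile c S a)) y =
      c * (S ^ 2 * solitaryProfile c S a y - a * S / 2 * solitaryProfile c S a y ^ 2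
        - solitaryProfile c S a y ^ 3 / 3) := by
  have hb : √(6 + a ^ 2) ^ 2 = 6 + a ^ 2 := sq_sqrt (by positivity)
  have hk : (√c * S) ^ 2 = c * S ^ 2 := by rw [mul_pow, sq_sqrt hc]
  have hden (y : ℝ) : a + √(6 + a ^ 2) * cosh (√c * S * y) ≠ 0 := (add_sqrt_mul_cosh_pos a _).ne'
  unfold solitaryProfile
  rw [deriv_const_mul_field', deriv_const_mul_field, deriv_deriv_recipAddCosh hden, hb, hk]
  ring

theorem mkdvLHS_solitaryWave_eq_zero {α c S a : ℝ} {K E : ℂ} (hc : 0 ≤ c)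
    (hK : α * Complex.normSq K = c) (hS : S ^ 2 = 1 - Complex.normSq E) (ha : a * S = 2 * E.re)
    (t x : ℝ) :
    mkdvLHS α 0 (travelingWave c fun y => K * (E + solitaryProfile c S a y)) t x = 0 := by
  refine mkdvLHS_travelingWave_eq_zero_of_cubic_ode hK
    ((contDiff_solitaryProfile (n := 1) c S a).differentiable one_ne_zero) (fun y => ?_) t x
  rw [deriv_deriv_solitaryProfile hc, hS, ha, mul_div_cancel_left₀ _ two_ne_zero]

theorem sinh_mul_sech (Θ : ℝ) : sinh Θ * sech Θ = tanh Θ := by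
  rw [sech, mul_one_div, tanh_eq_sinh_div_cosh]

theorem sech_sq (Θ : ℝ) : sech Θ ^ 2 = 1 - tanh Θ ^ 2 := by
  have := (cosh_pos Θ).ne'
  rw [sech, tanh_eq_sinh_div_cosh]
  field_simp
  linarith [cosh_sq Θ]

theorem normSq_exp_ofReal_mul_I_mul_ofReal (φ r : ℝ) :
    Complex.normSq (Complex.exp (φ * Complex.I) * r) = r ^ 2 := by
  rw [Complex.normSq_mul, Complex.normSq_eq_norm_sq, Complex.norm_exp_ofReal_mul_I,
    Complex.normSq_ofReal]
  ring

/-- the complex solitary wave (solitary1) for `Im α = 0`, `β = 0`. -/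
theorem stmt5 (α : ℝ) (hα : 0 < α) (c : ℝ) (hc : 0 < c)
    (Θ θ φ : ℝ) (hθ : θ ∈ Set.Ico 0 (2 * Real.pi)) (hφ : φ ∈ Set.Ico 0 (2 * Real.pi))
    (u : ℝ → ℝ → ℂ)
    (hu : ∀ t x : ℝ, u t x =
      Complex.exp ((φ : ℂ) * Complex.I) * ((Real.sqrt (c / α) : ℝ) : ℂ) *
        (Complex.exp ((θ : ℂ) * Complex.I) * ((Real.tanh Θ : ℝ) : ℂ)
          + ((6 * sech Θ /
              (2 * Real.cos θ * Real.sinh Θ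
                + Real.sqrt (6 + 4 * (Real.cos θ) ^ 2 * (Real.sinh Θ) ^ 2)
                  * Real.cosh (Real.sqrt c * (x - c * t) * sech Θ)) : ℝ) : ℂ))) :
    (∀ t x : ℝ,
        2 * Real.cos θ * Real.sinh Θ
          + Real.sqrt (6 + 4 * (Real.cos θ) ^ 2 * (Real.sinh Θ) ^ 2)
            * Real.cosh (Real.sqrt c * (x - c * t) * sech Θ) ≠ 0)
      ∧ ContDiff ℝ (⊤ : ℕ∞) (Function.uncurry u)
      ∧ ∀ t x : ℝ, mkdvLHS (α : ℂ) 0 u t x = 0 := by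
  set a := 2 * cos θ * sinh Θ with ha
  set E := Complex.exp (θ * Complex.I) * (tanh Θ : ℂ) with hE
  set K := Complex.exp (φ * Complex.I) * (√(c / α) : ℂ) with hK
  have hB : 6 + 4 * cos θ ^ 2 * sinh Θ ^ 2 = 6 + a ^ 2 := by rw [ha]; ring
  rw [hB] at hu ⊢
  have hwave : u = travelingWave c fun y => K * (E + solitaryProfile c (sech Θ) a y) := by
    funext t x
    rw [hu, travelingWave, solitaryProfile, recipAddCosh, div_eq_mul_inv, mul_right_comm (√c)]
  refine ⟨fun t x => (add_sqrt_mul_cosh_pos a _).ne', ?_, ?_⟩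
  · rw [hwave]
    exact contDiff_uncurry_travelingWave c (contDiff_const.mul (contDiff_const.add
      (Complex.ofRealCLM.contDiff.comp (contDiff_solitaryProfile c _ a))))
  · rw [hwave]
    refine mkdvLHS_solitaryWave_eq_zero hc.le ?_ ?_ ?_
    · rw [hK, normSq_exp_ofReal_mul_I_mul_ofReal, sq_sqrt (by positivity),
        mul_div_cancel₀ _ hα.ne']
    · rw [hE, normSq_exp_ofReal_mul_I_mul_ofReal, sech_sq]
    · rw [ha, hE, Complex.re_mul_ofReal, Complex.exp_ofReal_mul_I_re, mul_assoc, sinh_mul_sech]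
      ring
end

section
/- Let α ∈ ℂ, β = −α, c > 0, Θ ∈ ℝ, φ ∈ [0, 2π). Then the function u(t,x) = e^{iφ}·( sinh Θ + exp(−√c·|x − c·t|) ) satisfies the complex mKdV equation u_t + α·conj(u)·u·u_x + β·u²·conj(u)_x + u_xxx = 0 at every point (t,x) with x ≠ c·t (u has a cusp along the line x = c·t). -/
/-! For `β = -α` the two nonlinear terms add up to `α u (conj u · u_x - u · conj u_x)`, which
vanishes for a wave of constant phase, so that only the linear equation `u_t + u_xxx = 0` remains.
On a travelling wave `u = F (x - c t)` it reads `F_yyy = c F_y`. Away from its cusp, the profile is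
a constant plus an exponential of rate `∓k`, where `k ^ 2 = c`, and solves this equation. -/

open Filter Topology ComplexConjugate

theorem deriv_deriv_deriv_eq_sq_smul {𝕜 V : Type*} [NontriviallyNormedField 𝕜]
    [NormedAddCommGroup V] [NormedSpace 𝕜 V] {f : 𝕜 → V} {a x : 𝕜} {b : V}
    (hf : deriv f =ᶠ[𝓝 x] fun y => a • (f y - b)) :
    deriv (deriv (deriv f)) x = a ^ 2 • deriv f x := by
  have hf₂ : deriv (deriv f) =ᶠ[𝓝 x] fun y => a • deriv f y :=
    hf.deriv.trans <| .of_eq <| funext fun y => by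
      rw [deriv_fun_const_smul_field, deriv_sub_const]
  calc deriv (deriv (deriv f)) x = a • deriv (deriv f) x := by
        rw [hf₂.deriv_eq, deriv_fun_const_smul_field]
    _ = a ^ 2 • deriv f x := by rw [hf₂.eq_of_nhds, smul_smul, sq]

theorem conj_mul_deriv_of_const_phase (A : ℂ) (g : ℝ → ℝ) (x : ℝ) :
    conj (A * g x) * deriv (fun y => A * (g y : ℂ)) x =
      A * g x * conj (deriv (fun y => A * (g y : ℂ)) x) := by
  have conj_deriv : conj (deriv (fun y => (g y : ℂ)) x) = deriv (fun y => (g y : ℂ)) x := by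
    simpa only [← starRingEnd_apply, Complex.conj_ofReal] using
      (deriv.star (f := fun y => (g y : ℂ)) (x := x)).symm
  rw [deriv_const_mul_field, map_mul, map_mul, conj_deriv, Complex.conj_ofReal]
  ring

theorem mkdvLHS_travelling_wave (α β : ℂ) (c : ℝ) (F : ℝ → ℂ) (t x : ℝ) :
    mkdvLHS α β (fun t x => F (x - c * t)) t x =
      -c * deriv F (x - c * t)
        + α * conj (F (x - c * t)) * F (x - c * t) * deriv F (x - c * t)
        + β * F (x - c * t) ^ 2 * conj (deriv F (x - c * t))
        + deriv (deriv (deriv F)) (x - c * t) := by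
  have deriv_time : deriv (fun s => F (x - c * s)) t = -c * deriv F (x - c * t) := by
    rw [deriv_comp_mul_left c (fun y => F (x - y)), deriv_comp_const_sub, Complex.real_smul]
    ring
  have deriv_space (G : ℝ → ℂ) :
      deriv (fun y => G (y - c * t)) = fun y => deriv G (y - c * t) :=
    funext fun y => deriv_comp_sub_const ..
  have deriv_conj : deriv (fun y => conj (F (y - c * t))) x = conj (deriv F (x - c * t)) := by
    rw [← congrFun (deriv_space F) x]
    exact deriv.star
  simp only [mkdvLHS, deriv_time, deriv_space, deriv_conj]

theorem mkdvLHS_neg_travelling_wave_of_const_phase (α A : ℂ) (c : ℝ) (g : ℝ → ℝ) (t x : ℝ) :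
    mkdvLHS α (-α) (fun t x => A * (g (x - c * t) : ℂ)) t x =
      -c * deriv (fun y => A * (g y : ℂ)) (x - c * t)
        + deriv (deriv (deriv fun y => A * (g y : ℂ))) (x - c * t) := by
  rw [mkdvLHS_travelling_wave α (-α) c fun y => A * (g y : ℂ)]
  linear_combination α * (A * g (x - c * t)) * conj_mul_deriv_of_const_phase A g (x - c * t)

/-- The profile, in the moving coordinate `y = x - c t`, of a cusped wave with complex amplitude
`A`, background `b` and decay rate `k`, its cusp being at `y = 0`. -/
noncomputable def cuspedProfile (A : ℂ) (b k y : ℝ) : ℂ :=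
  A * (b + Real.exp (-k * |y|) : ℝ)

theorem hasDerivAt_cuspedProfile (A : ℂ) (b k : ℝ) {y : ℝ} (hy : y ≠ 0) :
    HasDerivAt (cuspedProfile A b k)
      ((-k * SignType.sign y : ℝ) • (cuspedProfile A b k y - A * b)) y := by
  have h := ((((hasDerivAt_abs hy).const_mul (-k)).exp.const_add b).ofReal_comp).const_mul A
  refine h.congr_deriv ?_
  simp only [cuspedProfile, Complex.real_smul]
  push_cast
  ring

theorem deriv_deriv_deriv_cuspedProfile (A : ℂ) (b k : ℝ) {y : ℝ} (hy : y ≠ 0) :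
    deriv (deriv (deriv (cuspedProfile A b k))) y = k ^ 2 • deriv (cuspedProfile A b k) y := by
  have hsign : ∀ᶠ z in 𝓝 y, SignType.sign z = SignType.sign y := by
    simpa only [ContinuousAt, nhds_discrete, tendsto_pure] using continuousAt_sign_of_ne_zero hy
  have hderiv : deriv (cuspedProfile A b k) =ᶠ[𝓝 y]
      fun z => (-k * SignType.sign y : ℝ) • (cuspedProfile A b k z - A * b) := by
    filter_upwards [eventually_ne_nhds hy, hsign] with z hz hz_sign
    rw [(hasDerivAt_cuspedProfile A b k hz).deriv, hz_sign]
  have hrate : (-k * SignType.sign y : ℝ) ^ 2 = k ^ 2 := by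
    rcases hy.lt_or_gt with h | h <;> simp [h]
  rw [deriv_deriv_deriv_eq_sq_smul hderiv, hrate]

theorem stmt9_general (α A : ℂ) (b : ℝ) {c k : ℝ} (hk : k ^ 2 = c) (u : ℝ → ℝ → ℂ)
    (hu : ∀ t x : ℝ, u t x = A * (b + Real.exp (-k * |x - c * t|) : ℝ)) :
    ∀ t x : ℝ, x ≠ c * t → mkdvLHS α (-α) u t x = 0 := by
  intro t x hx
  have third_deriv := deriv_deriv_deriv_cuspedProfile A b k (sub_ne_zero.mpr hx)
  rw [hk, Complex.real_smul] at third_deriv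
  unfold cuspedProfile at third_deriv
  rw [funext₂ hu,
    mkdvLHS_neg_travelling_wave_of_const_phase α A c fun y => b + Real.exp (-k * |y|), third_deriv]
  ring

/-- the cusped solitary wave (solitary5) for `β = −α`, satisfying the
complex mKdV equation away from the peak line `x = c·t`. -/
theorem stmt9 (α : ℂ) (β : ℂ) (hβ : β = -α) (c : ℝ) (hc : 0 < c)
    (Θ φ : ℝ) (hφ : φ ∈ Set.Ico 0 (2 * Real.pi))
    (u : ℝ → ℝ → ℂ)
    (hu : ∀ t x : ℝ, u t x =
      Complex.exp ((φ : ℂ) * Complex.I) *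
        (((Real.sinh Θ + Real.exp (-(Real.sqrt c) * |x - c * t|) : ℝ) : ℂ))) :
    ∀ t x : ℝ, x ≠ c * t → mkdvLHS α β u t x = 0 :=
  hβ ▸ stmt9_general α _ _ (Real.sq_sqrt hc.le) u hu
end

section
/- Let α, β ∈ ℂ with Im(α + β) = 0 and Re(α + β) < 0, let c < 0, and let φ ∈ [0, 2π). Then the function u(t,x) = e^{iφ}·√(3c/(α+β))·tanh(√(−c/2)·(x − c·t)) (where 3c/(α+β) > 0, so the square root is the positive real one) is smooth on ℝ×ℝ and satisfies the complex mKdV equation u_t + α·conj(u)·u·u_x + β·u²·conj(u)_x + u_xxx = 0 at every point (t,x) ∈ ℝ×ℝ. -/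
/-!
A travelling wave `A w(x - ct)` with complex amplitude `A` and real profile `w` has
`conj(u) u u_x = u² conj(u)_x`, so `α` and `β` enter only through `α + β`, and the equation reduces
to the profile equation `((α + β)‖A‖² w² - c) w' + w''' = 0`. The profile `w(ξ) = tanh(kξ)` solves
the Riccati equation `w' = k(1 - w²)`, hence `w''' = (6k² w² - 2k²) w'`, so the wave is a solution
as soon as `(α + β)‖A‖² = -6k²` and `c = -2k²`.
-/

open Function Complex ComplexConjugate

theorem contDiff_tanh {n : WithTop ℕ∞} : ContDiff ℝ n Real.tanh := by
  simp only [funext Real.tanh_eq_sinh_div_cosh]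
  exact Real.contDiff_sinh.div Real.contDiff_cosh fun x => (Real.cosh_pos x).ne'

theorem hasDerivAt_tanh (x : ℝ) : HasDerivAt Real.tanh (1 - Real.tanh x ^ 2) x := by
  have hcosh : Real.cosh x ≠ 0 := (Real.cosh_pos x).ne'
  simp only [funext Real.tanh_eq_sinh_div_cosh]
  refine ((Real.hasDerivAt_sinh x).fun_div (Real.hasDerivAt_cosh x) hcosh).congr_deriv ?_
  field_simp

theorem hasDerivAt_tanh_const_mul (k x : ℝ) :
    HasDerivAt (fun y => Real.tanh (k * y)) (k * (1 - Real.tanh (k * x) ^ 2)) x := by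
  simpa only [comp_def, mul_comm k (1 - _)] using
    (hasDerivAt_tanh (k * x)).comp x (hasDerivAt_const_mul k)

theorem deriv_deriv_deriv_of_riccati {w : ℝ → ℝ} {k : ℝ}
    (hw : ∀ x, HasDerivAt w (k * (1 - w x ^ 2)) x) (x : ℝ) :
    deriv (deriv (deriv w)) x = (6 * k ^ 2 * w x ^ 2 - 2 * k ^ 2) * deriv w x := by
  have first : deriv w = fun y => k * (1 - w y ^ 2) := funext fun y => (hw y).deriv
  have second : deriv (deriv w) = fun y => 2 * k ^ 2 * (w y ^ 3 - w y) := by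
    rw [first]
    refine funext fun y => HasDerivAt.deriv ?_
    refine ((((hw y).fun_pow 2).const_sub 1).const_mul k).congr_deriv ?_
    push_cast
    ring
  rw [second, first]
  refine HasDerivAt.deriv ?_
  refine ((((hw x).fun_pow 3).fun_sub (hw x)).const_mul (2 * k ^ 2)).congr_deriv ?_
  push_cast
  ring

/-- The wave `u(t, x) = A w(x - ct)` with velocity `c`. The profile `w` is real, so that the phase
of `u` is carried by the constant amplitude `A`. -/
noncomputable def travellingWave (A : ℂ) (w : ℝ → ℝ) (c t x : ℝ) : ℂ :=
  A * (w (x - c * t) : ℂ)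

section TravellingWave

variable {w : ℝ → ℝ} (A : ℂ) (c t x : ℝ)

theorem conj_travellingWave (w : ℝ → ℝ) :
    conj (travellingWave A w c t x) = travellingWave (conj A) w c t x := by
  simp only [travellingWave, map_mul, conj_ofReal]

theorem contDiff_uncurry_travellingWave {n : WithTop ℕ∞} (hw : ContDiff ℝ n w) :
    ContDiff ℝ n (uncurry (travellingWave A w c)) := by
  have hphase : ContDiff ℝ n fun p : ℝ × ℝ => p.2 - c * p.1 := by fun_prop
  exact contDiff_const.mul (ofRealCLM.contDiff.comp (hw.comp hphase))

theorem deriv_travellingWave (hw : Differentiable ℝ w) :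
    deriv (travellingWave A w c t) = travellingWave A (deriv w) c t :=
  funext fun y =>
    (((hw (y - c * t)).hasDerivAt.comp_sub_const y (c * t)).ofReal_comp.const_mul A).deriv

theorem deriv_travellingWave_time (hw : Differentiable ℝ w) :
    deriv (fun s => travellingWave A w c s x) t = -c * travellingWave A (deriv w) c t x := by
  have hphase : HasDerivAt (fun s => x - c * s) (-c) t := (hasDerivAt_const_mul c).const_sub x
  have hprofile := (hw (x - c * t)).hasDerivAt.comp t hphase
  refine (hprofile.ofReal_comp.const_mul A).deriv.trans ?_
  rw [travellingWave]
  push_cast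
  ring

theorem mkdvLHS_travellingWave (α β : ℂ) (hw : ContDiff ℝ 3 w) :
    mkdvLHS α β (travellingWave A w c) t x =
      A * (((α + β) * (‖A‖ : ℂ) ^ 2 * (w (x - c * t) : ℂ) ^ 2 - c) * (deriv w (x - c * t) : ℝ)
        + (deriv (deriv (deriv w)) (x - c * t) : ℝ)) := by
  have hw' : ContDiff ℝ 2 (deriv w) := hw.deriv'
  have hw'' : ContDiff ℝ 1 (deriv (deriv w)) := hw'.deriv'
  have dw : Differentiable ℝ w := hw.differentiable (by norm_num)
  have dw' : Differentiable ℝ (deriv w) := hw'.differentiable (by norm_num)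
  have dw'' : Differentiable ℝ (deriv (deriv w)) := hw''.differentiable (by norm_num)
  have hconj : deriv (fun y => conj (travellingWave A w c t y)) x =
      travellingWave (conj A) (deriv w) c t x := by
    simp only [conj_travellingWave]
    exact congrFun (deriv_travellingWave (conj A) c t dw) x
  rw [mkdvLHS, hconj, conj_travellingWave, deriv_travellingWave_time A c t x dw,
    deriv_travellingWave A c t dw, deriv_travellingWave A c t dw', deriv_travellingWave A c t dw'',
    ← mul_conj']
  simp only [travellingWave]
  ring

end TravellingWave

theorem mkdvLHS_travellingWave_tanh_eq_zero {α β A : ℂ} {c k : ℝ}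
    (hA : (α + β) * (‖A‖ : ℂ) ^ 2 = 3 * c) (hk : k ^ 2 = -c / 2) (t x : ℝ) :
    mkdvLHS α β (travellingWave A (fun ξ => Real.tanh (k * ξ)) c) t x = 0 := by
  have hsmooth : ContDiff ℝ 3 fun ξ => Real.tanh (k * ξ) := contDiff_tanh.comp (by fun_prop)
  rw [mkdvLHS_travellingWave A c t x α β hsmooth,
    deriv_deriv_deriv_of_riccati (hasDerivAt_tanh_const_mul k), hA, hk]
  push_cast
  ring

/-- the tanh kink (kink1) for `Im(α+β) = 0`, `Re(α+β) < 0`, `c < 0`. -/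
theorem stmt10 (α β : ℂ) (him : (α + β).im = 0) (hre : (α + β).re < 0)
    (c : ℝ) (hc : c < 0)
    (φ : ℝ) (hφ : φ ∈ Set.Ico 0 (2 * Real.pi))
    (u : ℝ → ℝ → ℂ)
    (hu : ∀ t x : ℝ, u t x =
      Complex.exp ((φ : ℂ) * Complex.I) *
        (((Real.sqrt (3 * c / (α + β).re)
          * Real.tanh (Real.sqrt (-c / 2) * (x - c * t)) : ℝ) : ℂ))) :
    ContDiff ℝ (⊤ : ℕ∞) (Function.uncurry u)
      ∧ ∀ t x : ℝ, mkdvLHS α β u t x = 0 := by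
  set r := (α + β).re
  set A : ℂ := exp (φ * I) * (√(3 * c / r) : ℝ)
  have hwave : u = travellingWave A (fun ξ => Real.tanh (√(-c / 2) * ξ)) c := by
    ext t x
    rw [hu, ofReal_mul, ← mul_assoc, travellingWave]
  have hnorm : ‖A‖ = √(3 * c / r) := by
    rw [norm_mul, norm_exp_ofReal_mul_I, one_mul, norm_real,
      Real.norm_of_nonneg (Real.sqrt_nonneg _)]
  have hsum : α + β = (r : ℂ) := Complex.ext rfl him
  have hamplitude : (α + β) * (‖A‖ : ℂ) ^ 2 = 3 * c := by
    rw [hnorm, hsum]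
    norm_cast
    rw [Real.sq_sqrt (div_nonneg_of_nonpos (by linarith) hre.le), mul_div_cancel₀ _ hre.ne]
  have hrate : √(-c / 2) ^ 2 = -c / 2 := Real.sq_sqrt (by linarith)
  rw [hwave]
  exact ⟨contDiff_uncurry_travellingWave A c (contDiff_tanh.comp (by fun_prop)),
    mkdvLHS_travellingWave_tanh_eq_zero hamplitude hrate⟩
end

section
/- Let α > 0 be real, β = 0, k ∈ ℝ, c ∈ ℝ with c + 3k² > 0, and φ ∈ [0, 2π). Then the function u(t,x) = √(6(c + 3k²)/α)·e^{iφ}·exp( i·k·(x − (3c + 8k²)·t) )·sech( √(c + 3k²)·(x − c·t) ) is smooth on ℝ×ℝ and satisfies the complex mKdV equation u_t + α·conj(u)·u·u_x + u_xxx = 0 at every point (t,x) ∈ ℝ×ℝ. -/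
/-!
Write `u(t, x) = exp(i(kx + wt + φ)) f(x - ct)`. The operator `∂ₓ` acts on the profile `f` as
`D + ik` and `∂ₜ` as `iw - cD`, while the nonlinear terms are gauge covariant, so the exponential
factors out and the equation becomes an ODE for `f`. For real `f`, `β = 0` and
`w = -k(3c + 8k²)`, the profile equation `f'' = (c + 3k²) f - (α/3) f³` suffices: the imaginary
part of the ODE is a multiple of it and the real part is its derivative. A rescaled `sech` solves
it because `sech'' = sech - 2 sech³`.
-/

open Complex ComplexConjugate

section Sech

theorem sech_mul_cosh (y : ℝ) : sech y * Real.cosh y = 1 :=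
  one_div_mul_cancel (Real.cosh_pos y).ne'

theorem contDiff_sech {n : WithTop ℕ∞} : ContDiff ℝ n sech :=
  contDiff_const.div Real.contDiff_cosh fun y => (Real.cosh_pos y).ne'

theorem hasDerivAt_sech (y : ℝ) : HasDerivAt sech (-(Real.sinh y * sech y ^ 2)) y := by
  refine ((hasDerivAt_const y (1 : ℝ)).div (Real.hasDerivAt_cosh y)
    (Real.cosh_pos y).ne').congr_deriv ?_
  rw [sech]
  ring

theorem hasDerivAt_neg_sinh_mul_sech_sq (y : ℝ) :
    HasDerivAt (fun z => -(Real.sinh z * sech z ^ 2)) (sech y - 2 * sech y ^ 3) y := by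
  refine ((Real.hasDerivAt_sinh y).mul ((hasDerivAt_sech y).pow 2)).neg.congr_deriv ?_
  have h_inv := sech_mul_cosh y
  have h_cosh : Real.cosh y * sech y ^ 2 = sech y := by linear_combination sech y * h_inv
  have h_sinh : Real.sinh y ^ 2 * sech y ^ 3 = sech y - sech y ^ 3 := by
    linear_combination
      -sech y ^ 3 * Real.cosh_sq y + sech y * (sech y * Real.cosh y + 1) * h_inv
  simp only [Pi.pow_apply]
  push_cast
  linear_combination 2 * h_sinh - h_cosh

variable (A m y : ℝ)

theorem hasDerivAt_const_mul_sech_mul :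
    HasDerivAt (fun z => A * sech (m * z))
      (A * m * -(Real.sinh (m * y) * sech (m * y) ^ 2)) y := by
  refine (((hasDerivAt_sech (m * y)).comp y
    (hasDerivAt_const_mul m)).const_mul A).congr_deriv ?_
  ring

theorem hasDerivAt_const_mul_neg_sinh_mul_sech_sq_mul :
    HasDerivAt (fun z => A * m * -(Real.sinh (m * z) * sech (m * z) ^ 2))
      (A * m ^ 2 * (sech (m * y) - 2 * sech (m * y) ^ 3)) y := by
  refine (((hasDerivAt_neg_sinh_mul_sech_sq (m * y)).comp y
    (hasDerivAt_const_mul m)).const_mul (A * m)).congr_deriv ?_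
  ring

end Sech

/-- The wave `u(t, x) = exp(i(kx + wt + φ)) f(x - ct)` with linear phase, wave number `k`,
frequency `w`, speed `c`, phase shift `φ` and profile `f`. The profile is complex-valued, so that
the derivatives of such a wave are again of this form. -/
noncomputable def linearPhaseWave (k w c φ : ℝ) (f : ℝ → ℂ) (t x : ℝ) : ℂ :=
  exp ((k * x + w * t + φ : ℝ) * I) * f (x - c * t)

section LinearPhaseWave

variable {k w c φ : ℝ} {f : ℝ → ℂ}

theorem contDiff_uncurry_linearPhaseWave {n : WithTop ℕ∞} (hf : ContDiff ℝ n f) :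
    ContDiff ℝ n (Function.uncurry (linearPhaseWave k w c φ f)) := by
  have h_phase : ContDiff ℝ n fun p : ℝ × ℝ => k * p.2 + w * p.1 + φ := by fun_prop
  have h_travel : ContDiff ℝ n fun p : ℝ × ℝ => p.2 - c * p.1 := by fun_prop
  exact ((ofRealCLM.contDiff.comp h_phase).mul contDiff_const).cexp.mul (hf.comp h_travel)

theorem hasDerivAt_linearPhaseWave {f' : ℂ} {t x : ℝ} (hf : HasDerivAt f f' (x - c * t)) :
    HasDerivAt (linearPhaseWave k w c φ f t)
      (exp ((k * x + w * t + φ : ℝ) * I) * (f' + k * I * f (x - c * t))) x := by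
  have h_phase : HasDerivAt (fun y : ℝ => k * y + w * t + φ) k x :=
    ((hasDerivAt_const_mul k).add_const (w * t)).add_const φ
  refine ((h_phase.ofReal_comp.mul_const I).cexp.mul
    (hf.comp_sub_const x (c * t))).congr_deriv ?_
  ring

theorem hasDerivAt_linearPhaseWave_time {f' : ℂ} {t x : ℝ} (hf : HasDerivAt f f' (x - c * t)) :
    HasDerivAt (fun s => linearPhaseWave k w c φ f s x)
      (exp ((k * x + w * t + φ : ℝ) * I) * (w * I * f (x - c * t) - c * f')) t := by
  have h_phase : HasDerivAt (fun s : ℝ => k * x + w * s + φ) w t :=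
    ((hasDerivAt_const_mul w).const_add (k * x)).add_const φ
  have h_travel : HasDerivAt (fun s : ℝ => x - c * s) (-c) t :=
    (hasDerivAt_const_mul c).const_sub x
  refine ((h_phase.ofReal_comp.mul_const I).cexp.mul (hf.scomp t h_travel)).congr_deriv ?_
  simp only [Function.comp_apply, real_smul, ofReal_neg]
  ring

theorem deriv_linearPhaseWave {f' : ℝ → ℂ} (hf : ∀ y, HasDerivAt f (f' y) y) (t : ℝ) :
    deriv (linearPhaseWave k w c φ f t) =
      linearPhaseWave k w c φ (fun y => f' y + k * I * f y) t :=
  funext fun x => (hasDerivAt_linearPhaseWave (hf (x - c * t))).deriv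

variable {f₁ f₂ f₃ : ℝ → ℂ}

theorem deriv_deriv_deriv_linearPhaseWave
    (hf : ∀ y, HasDerivAt f (f₁ y) y) (hf₁ : ∀ y, HasDerivAt f₁ (f₂ y) y)
    (hf₂ : ∀ y, HasDerivAt f₂ (f₃ y) y) (t : ℝ) :
    deriv (deriv (deriv (linearPhaseWave k w c φ f t))) =
      linearPhaseWave k w c φ
        (fun y => f₃ y + 3 * (k * I) * f₂ y + 3 * (k * I) ^ 2 * f₁ y + (k * I) ^ 3 * f y) t := by
  have h₁ (y : ℝ) := (hf₁ y).fun_add ((hf y).const_mul (k * I))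
  have h₂ (y : ℝ) :=
    ((hf₂ y).fun_add ((hf₁ y).const_mul (k * I))).fun_add ((h₁ y).const_mul (k * I))
  rw [deriv_linearPhaseWave hf, deriv_linearPhaseWave h₁, deriv_linearPhaseWave h₂]
  congr 1
  funext y
  ring

theorem mkdvLHS_linearPhaseWave
    (hf : ∀ y, HasDerivAt f (f₁ y) y) (hf₁ : ∀ y, HasDerivAt f₁ (f₂ y) y)
    (hf₂ : ∀ y, HasDerivAt f₂ (f₃ y) y)
    (α β : ℂ) (t x : ℝ) :
    mkdvLHS α β (linearPhaseWave k w c φ f) t x =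
      linearPhaseWave k w c φ (fun y =>
        (w * I * f y - c * f₁ y)
          + α * conj (f y) * f y * (f₁ y + k * I * f y)
          + β * f y ^ 2 * conj (f₁ y + k * I * f y)
          + (f₃ y + 3 * (k * I) * f₂ y + 3 * (k * I) ^ 2 * f₁ y + (k * I) ^ 3 * f y)) t x := by
  have h_conj : deriv (fun y => conj (linearPhaseWave k w c φ f t y)) x =
      conj (deriv (linearPhaseWave k w c φ f t) x) := deriv.star
  have h_unit : conj (exp ((k * x + w * t + φ : ℝ) * I)) *
      exp ((k * x + w * t + φ : ℝ) * I) = 1 := by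
    rw [conj_mul', norm_exp_ofReal_mul_I, ofReal_one, one_pow]
  rw [mkdvLHS, h_conj, (hasDerivAt_linearPhaseWave_time (hf (x - c * t))).deriv,
    deriv_deriv_deriv_linearPhaseWave hf hf₁ hf₂, deriv_linearPhaseWave hf]
  simp only [linearPhaseWave, map_mul]
  generalize exp ((k * x + w * t + φ : ℝ) * I) = e at h_unit ⊢
  generalize x - c * t = y
  linear_combination e * (α * conj (f y) * f y * (f₁ y + k * I * f y)
    + β * f y ^ 2 * conj (f₁ y + k * I * f y)) * h_unit

end LinearPhaseWave

theorem mkdvLHS_linearPhaseWave_eq_zero {α k c φ : ℝ} {f f' : ℝ → ℝ}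
    (hf : ∀ y, HasDerivAt f (f' y) y)
    (hf' : ∀ y, HasDerivAt f' ((c + 3 * k ^ 2) * f y - α / 3 * f y ^ 3) y) (t x : ℝ) :
    mkdvLHS α 0 (linearPhaseWave k (-(k * (3 * c + 8 * k ^ 2))) c φ (fun y => f y)) t x = 0 := by
  have hf'' (y : ℝ) : HasDerivAt (fun z => (c + 3 * k ^ 2) * f z - α / 3 * f z ^ 3)
      ((c + 3 * k ^ 2) * f' y - α * f y ^ 2 * f' y) y := by
    refine (((hf y).const_mul (c + 3 * k ^ 2)).sub
      (((hf y).pow 3).const_mul (α / 3))).congr_deriv ?_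
    push_cast
    ring
  rw [mkdvLHS_linearPhaseWave (fun y => (hf y).ofReal_comp) (fun y => (hf' y).ofReal_comp)
    (fun y => (hf'' y).ofReal_comp), linearPhaseWave]
  refine mul_eq_zero_of_right _ ?_
  simp only [conj_ofReal]
  push_cast
  linear_combination (3 * (k : ℂ) ^ 2 * f' (x - c * t) + k ^ 3 * I * f (x - c * t)) * I_sq

/-- the sech solitary wave with linear phase, for `α > 0` real, `β = 0`,
`c + 3k² > 0`. -/
theorem stmt12 (α : ℝ) (hα : 0 < α) (k c : ℝ) (hck : 0 < c + 3 * k ^ 2)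
    (φ : ℝ) (hφ : φ ∈ Set.Ico 0 (2 * Real.pi))
    (u : ℝ → ℝ → ℂ)
    (hu : ∀ t x : ℝ, u t x =
      ((Real.sqrt (6 * (c + 3 * k ^ 2) / α) : ℝ) : ℂ)
        * Complex.exp ((φ : ℂ) * Complex.I)
        * Complex.exp (Complex.I * ((k * (x - (3 * c + 8 * k ^ 2) * t) : ℝ) : ℂ))
        * ((sech (Real.sqrt (c + 3 * k ^ 2) * (x - c * t)) : ℝ) : ℂ)) :
    ContDiff ℝ (⊤ : ℕ∞) (Function.uncurry u)
      ∧ ∀ t x : ℝ, mkdvLHS (α : ℂ) 0 u t x = 0 := by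
  have hm : √(c + 3 * k ^ 2) ^ 2 = c + 3 * k ^ 2 := Real.sq_sqrt hck.le
  have hA : α * √(6 * (c + 3 * k ^ 2) / α) ^ 2 = 6 * (c + 3 * k ^ 2) := by
    rw [Real.sq_sqrt (by positivity), mul_div_cancel₀ _ hα.ne']
  set m := √(c + 3 * k ^ 2)
  set A := √(6 * (c + 3 * k ^ 2) / α)
  obtain rfl : u = linearPhaseWave k (-(k * (3 * c + 8 * k ^ 2))) c φ
      (fun y => (A * sech (m * y) : ℝ)) := by
    funext t x
    rw [hu, linearPhaseWave, mul_assoc (A : ℂ), ← exp_add]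
    push_cast
    ring_nf
  have h_profile : ContDiff ℝ (⊤ : ℕ∞) fun y => A * sech (m * y) :=
    contDiff_const.mul (contDiff_sech.comp (contDiff_const.mul contDiff_id))
  refine ⟨contDiff_uncurry_linearPhaseWave (ofRealCLM.contDiff.comp h_profile),
    mkdvLHS_linearPhaseWave_eq_zero (hasDerivAt_const_mul_sech_mul A m) fun y => ?_⟩
  refine (hasDerivAt_const_mul_neg_sinh_mul_sech_sq_mul A m y).congr_deriv ?_
  linear_combination (A * sech (m * y) - 2 * A * sech (m * y) ^ 3) * hm
    + A * sech (m * y) ^ 3 / 3 * hA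
end

section
/- Let α, β ∈ ℂ and σ ∈ ℝ, σ ≠ 0, satisfy α·(σ + i) + β·(σ − i) = 0 (which forces |α| = |β|). Let c ∈ ℝ satisfy either (c > 0 and σ² > 3) or (c < 0 and σ² < 3), so that q := √(c/(σ² − 3)) and κ := |σ|·q are positive reals. Let A > 0 and φ ∈ [0, 2π). Then the peakon u(t,x) = A·e^{iφ}·exp( −i·ε·q·( x − ((3σ² − 1)/(σ² − 3))·c·t ) )·exp( −κ·|x − c·t| ), where ε = sgn(σ·(x − c·t)), satisfies the complex mKdV equation u_t + α·conj(u)·u·u_x + β·u²·conj(u)_x + u_xxx = 0 at every point (t,x) with x ≠ c·t. -/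
/-!
On an exponential wave `E = B e^{mx + nt}` both nonlinear terms of the equation are multiples of
`conj E * E ^ 2`, so `E` is a solution as soon as `n = -m ^ 3` and `α m + β conj m = 0`. The second
condition holds for `m = r (σ + i)` with `r` real by the assumption on `α` and `β`, and the real and
imaginary parts of `(σ + i) ^ 3` then give the two velocities of the peakon: its decay factor moves
with speed `r ^ 2 (σ ^ 2 - 3) = c` and its phase with speed `r ^ 2 (3 σ ^ 2 - 1)`. Away from the
peak the sign `ε` is locally constant, so the peakon coincides locally with such a wave, `r = -ε q`.
-/

open Complex Filter Topology

/-- The complex exponential wave `B e^{mx + nt}`, of which the peakon is one on each side of its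
peak. As for `mkdvLHS`, the time variable comes first. -/
noncomputable def expWave (B m n : ℂ) (t x : ℝ) : ℂ :=
  B * exp (m * x + n * t)

/-- The travelling wave with linear phase, complex amplitude `B`, speed `c` and a cusp along
`x = c t`. The phase jumps sign across the cusp, and `σ` is the ratio of the spatial decay rate
to the wave number `q`, up to sign. -/
noncomputable def peakon (B : ℂ) (σ c q : ℝ) (t x : ℝ) : ℂ :=
  B * exp (-I * ((Real.sign (σ * (x - c * t)) * q *
      (x - (3 * σ ^ 2 - 1) / (σ ^ 2 - 3) * c * t) : ℝ) : ℂ))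
    * (Real.exp (-(|σ| * q) * |x - c * t|) : ℝ)

lemma mkdvLHS_congr {u v : ℝ → ℝ → ℂ} {t x : ℝ} (α β : ℂ)
    (h : ∀ᶠ p in 𝓝 (t, x), u p.1 p.2 = v p.1 p.2) :
    mkdvLHS α β u t x = mkdvLHS α β v t x := by
  have time : (fun s => u s x) =ᶠ[𝓝 t] fun s => v s x :=
    (Continuous.prodMk_left x).continuousAt.eventually h
  have space : u t =ᶠ[𝓝 x] v t := (Continuous.prodMk_right t).continuousAt.eventually h
  have conj : (fun y => (starRingEnd ℂ) (u t y)) =ᶠ[𝓝 x] fun y => (starRingEnd ℂ) (v t y) :=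
    space.fun_comp (starRingEnd ℂ)
  rw [mkdvLHS, mkdvLHS, time.deriv_eq, space.deriv_eq, conj.deriv_eq, space.deriv.deriv.deriv_eq,
    space.eq_of_nhds]

section ExpWave

variable (B m n : ℂ)

lemma expWave_swap (t x : ℝ) : expWave B m n t x = expWave B n m x t := by
  rw [expWave, expWave, add_comm]

lemma hasDerivAt_expWave (t x : ℝ) :
    HasDerivAt (expWave B m n t) (m * expWave B m n t x) x := by
  have exponent : HasDerivAt (fun y : ℝ => m * y + n * t) m x := by
    simpa using (ofRealCLM.hasDerivAt.const_mul m).add_const (n * t)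
  exact (exponent.cexp.const_mul B).congr_deriv (by rw [expWave]; ring)

lemma deriv_expWave (t : ℝ) : deriv (expWave B m n t) = fun x => m * expWave B m n t x :=
  funext fun x => (hasDerivAt_expWave B m n t x).deriv

lemma deriv_expWave_time (t x : ℝ) :
    deriv (fun s => expWave B m n s x) t = n * expWave B m n t x := by
  simp only [expWave_swap B m n, deriv_expWave]

lemma deriv_conj_expWave (t x : ℝ) :
    deriv (fun y => (starRingEnd ℂ) (expWave B m n t y)) x =
      (starRingEnd ℂ) (m * expWave B m n t x) :=
  (hasDerivAt_expWave B m n t x).star.deriv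

lemma mkdvLHS_expWave (α β : ℂ) (t x : ℝ) :
    mkdvLHS α β (expWave B m n) t x =
      (n + m ^ 3) * expWave B m n t x
        + (α * m + β * (starRingEnd ℂ) m)
          * ((starRingEnd ℂ) (expWave B m n t x) * expWave B m n t x ^ 2) := by
  simp only [mkdvLHS, deriv_expWave_time, deriv_conj_expWave, deriv_expWave,
    deriv_const_mul_field', map_mul]
  ring

end ExpWave

lemma mkdvLHS_expWave_eq_zero {α β : ℂ} {σ : ℝ} (hαβ : α * (σ + I) + β * (σ - I) = 0)
    (B : ℂ) (r t x : ℝ) :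
    mkdvLHS α β (expWave B (r * (σ + I)) (-(r * (σ + I)) ^ 3)) t x = 0 := by
  have nonlinear : α * (r * (σ + I)) + β * (starRingEnd ℂ) (r * (σ + I)) = 0 := by
    simp only [map_mul, map_add, conj_ofReal, conj_I]
    linear_combination r * hαβ
  rw [mkdvLHS_expWave, nonlinear]
  ring

lemma add_I_pow_three (z : ℂ) : (z + I) ^ 3 = z * (z ^ 2 - 3) + (3 * z ^ 2 - 1) * I := by
  linear_combination (3 * z + I) * I_sq

lemma realSign_pow_three (a : ℝ) : Real.sign a ^ 3 = Real.sign a := by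
  rcases Real.sign_apply_eq a with h | h | h <;> norm_num [h]

lemma realSign_mul_self (a : ℝ) : Real.sign a * a = |a| := by
  rcases lt_trichotomy a 0 with h | rfl | h
  · rw [Real.sign_of_neg h, abs_of_neg h, neg_one_mul]
  · rw [mul_zero, abs_zero]
  · rw [Real.sign_of_pos h, abs_of_pos h, one_mul]

lemma eventually_realSign_eq {a : ℝ} (ha : a ≠ 0) : ∀ᶠ b in 𝓝 a, Real.sign b = Real.sign a := by
  rcases ha.lt_or_gt with h | h
  · filter_upwards [gt_mem_nhds h] with b hb
    rw [Real.sign_of_neg hb, Real.sign_of_neg h]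
  · filter_upwards [lt_mem_nhds h] with b hb
    rw [Real.sign_of_pos hb, Real.sign_of_pos h]

section Peakon

variable {σ c q : ℝ}

lemma peakon_eq_expWave (hσ : σ ^ 2 - 3 ≠ 0) (hc : q ^ 2 * (σ ^ 2 - 3) = c) (B : ℂ) {ε t x : ℝ}
    (hε : Real.sign (σ * (x - c * t)) = ε) :
    peakon B σ c q t x =
      expWave B ((-(ε * q) : ℝ) * (σ + I)) (-((-(ε * q) : ℝ) * (σ + I)) ^ 3) t x := by
  have decay : -(|σ| * q) * |x - c * t| = -(ε * q) * (σ * (x - c * t)) := by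
    have habs : |σ| * |x - c * t| = ε * (σ * (x - c * t)) := by
      rw [← abs_mul, ← realSign_mul_self, hε]
    linear_combination -q * habs
  have phase_speed : (3 * σ ^ 2 - 1) / (σ ^ 2 - 3) * c = (3 * σ ^ 2 - 1) * q ^ 2 := by
    rw [← hc]
    field_simp
  have hε_cube : (ε : ℂ) ^ 3 = ε := by
    rw [← hε]
    exact_mod_cast realSign_pow_three _
  rw [peakon, expWave, hε, decay, phase_speed, ofReal_exp, mul_assoc, ← exp_add, ← hc, mul_pow,
    add_I_pow_three]
  congr 2
  push_cast
  linear_combination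
    (-q ^ 3 * t * (σ * (σ ^ 2 - 3) + (3 * σ ^ 2 - 1) * I) : ℂ) * hε_cube

lemma mkdvLHS_peakon_eq_zero {α β : ℂ} (hαβ : α * (σ + I) + β * (σ - I) = 0) (hσ₀ : σ ≠ 0)
    (hσ : σ ^ 2 - 3 ≠ 0) (hc : q ^ 2 * (σ ^ 2 - 3) = c) (B : ℂ) {t x : ℝ} (hx : x ≠ c * t) :
    mkdvLHS α β (peakon B σ c q) t x = 0 := by
  have hcont : ContinuousAt (fun p : ℝ × ℝ => σ * (p.2 - c * p.1)) (t, x) := by fun_prop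
  have sign_const : ∀ᶠ p : ℝ × ℝ in 𝓝 (t, x),
      Real.sign (σ * (p.2 - c * p.1)) = Real.sign (σ * (x - c * t)) :=
    hcont.eventually (eventually_realSign_eq (mul_ne_zero hσ₀ (sub_ne_zero.2 hx)))
  rw [mkdvLHS_congr α β (sign_const.mono fun _ => peakon_eq_expWave hσ hc B)]
  exact mkdvLHS_expWave_eq_zero hαβ B _ t x

end Peakon

/-- the singular peakon with linear phase, for coefficients satisfying
`α·(σ + i) + β·(σ − i) = 0` with `σ ≠ 0` real; it satisfies the complex mKdV
equation away from the peak line `x = c·t`.  Here `q = √(c/(σ² − 3))`,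
`κ = |σ|·q`, and `ε = sgn(σ·(x − c·t))`. -/
theorem stmt13 (α β : ℂ) (σ : ℝ) (hσ : σ ≠ 0)
    (hαβ : α * ((σ : ℂ) + Complex.I) + β * ((σ : ℂ) - Complex.I) = 0)
    (c : ℝ) (hc : (0 < c ∧ 3 < σ ^ 2) ∨ (c < 0 ∧ σ ^ 2 < 3))
    (q κ : ℝ) (hq : q = Real.sqrt (c / (σ ^ 2 - 3))) (hκ : κ = |σ| * q)
    (A : ℝ) (hA : 0 < A) (φ : ℝ) (hφ : φ ∈ Set.Ico 0 (2 * Real.pi))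
    (u : ℝ → ℝ → ℂ)
    (hu : ∀ t x : ℝ, u t x =
      (A : ℂ) * Complex.exp ((φ : ℂ) * Complex.I)
        * Complex.exp (-Complex.I *
            ((Real.sign (σ * (x - c * t)) * q *
              (x - ((3 * σ ^ 2 - 1) / (σ ^ 2 - 3)) * c * t) : ℝ) : ℂ))
        * ((Real.exp (-κ * |x - c * t|) : ℝ) : ℂ)) :
    0 < q ∧ 0 < κ ∧ ∀ t x : ℝ, x ≠ c * t → mkdvLHS α β u t x = 0 := by
  have hc_div : 0 < c / (σ ^ 2 - 3) := by
    rw [div_pos_iff, sub_pos, sub_neg]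
    exact hc
  have hσ3 : σ ^ 2 - 3 ≠ 0 := (div_ne_zero_iff.1 hc_div.ne').2
  have hq_pos : 0 < q := hq ▸ Real.sqrt_pos.2 hc_div
  have speed : q ^ 2 * (σ ^ 2 - 3) = c := by
    rw [hq, Real.sq_sqrt hc_div.le, div_mul_cancel₀ _ hσ3]
  have hu_peakon : u = peakon (A * exp (φ * I)) σ c q := by
    ext t x
    rw [hu, hκ, peakon]
  refine ⟨hq_pos, hκ ▸ mul_pos (abs_pos.2 hσ) hq_pos, fun t x hx => ?_⟩
  rw [hu_peakon]
  exact mkdvLHS_peakon_eq_zero hαβ hσ hσ3 speed _ hx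
end

section
/- Let β ∈ ℂ and α = 3β. Then for every smooth function u : ℝ×ℝ → ℂ satisfying the complex mKdV equation u_t + 3β·conj(u)·u·u_x + β·u²·conj(u)_x + u_xxx = 0, the phase-covariant momentum density T = u² and flux X = 2β·u³·conj(u) − u_x² + 2·u·u_xx satisfy the local conservation law ∂_t T + ∂_x X = 0 at every point (t,x) ∈ ℝ×ℝ. -/
/-!
The conservation law has the multiplier `2 * u`: for arbitrary `α`, `β` and any sufficiently
differentiable `u`, solution or not, `∂ₜT + ∂ₓX` equals `2 * u` times the left-hand side of the
equation plus the defect `2 * (3 * β - α) * u² * conj u * uₓ`, which the choice `α = 3 * β` removes.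
-/

open scoped ComplexConjugate

section Derivatives

variable {𝕜 A : Type*} [NontriviallyNormedField 𝕜] [NormedCommRing A] [NormedAlgebra 𝕜 A]
  {f g : 𝕜 → A} {x : 𝕜}

theorem hasDerivAt_pow_three_mul {f' g' : A} (hf : HasDerivAt f f' x) (hg : HasDerivAt g g' x) :
    HasDerivAt (fun y => f y ^ 3 * g y) (f x ^ 2 * (3 * g x * f' + f x * g')) x := by
  convert! (hf.fun_pow 3).fun_mul hg using 1
  push_cast
  ring

theorem hasDerivAt_two_mul_mul_sub_sq {f₁ f₂ : 𝕜 → A} {f₃ : A} (hf : HasDerivAt f (f₁ x) x)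
    (hf₁ : HasDerivAt f₁ (f₂ x) x) (hf₂ : HasDerivAt f₂ f₃ x) :
    HasDerivAt (fun y => 2 * f y * f₂ y - f₁ y ^ 2) (2 * f x * f₃) x := by
  convert! ((hf.const_mul 2).fun_mul hf₂).fun_sub (hf₁.fun_pow 2) using 1
  push_cast
  ring

end Derivatives

/-- The flux `X = 2β·v³·conj(v) − v_x² + 2·v·v_xx` of the phase-covariant momentum density `v²`,
as a function of the space variable, for the profile `v` of a solution at a fixed time. -/
noncomputable def phaseMomentumFlux (β : ℂ) (v : ℝ → ℂ) (x : ℝ) : ℂ :=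
  2 * β * v x ^ 3 * conj (v x) - deriv v x ^ 2 + 2 * v x * deriv (deriv v) x

theorem deriv_phaseMomentumFlux (β : ℂ) {v : ℝ → ℂ} {x : ℝ} (hv : DifferentiableAt ℝ v x)
    (hv₁ : DifferentiableAt ℝ (deriv v) x) (hv₂ : DifferentiableAt ℝ (deriv (deriv v)) x) :
    deriv (phaseMomentumFlux β v) x =
      2 * β * (v x ^ 2 * (3 * conj (v x) * deriv v x + v x * deriv (fun y => conj (v y)) x))
        + 2 * v x * deriv (deriv (deriv v)) x := by
  have hconj : DifferentiableAt ℝ (fun y => conj (v y)) x := hv.star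
  have hcubic := (hasDerivAt_pow_three_mul hv.hasDerivAt hconj.hasDerivAt).const_mul (2 * β)
  have hdispersive := hasDerivAt_two_mul_mul_sub_sq hv.hasDerivAt hv₁.hasDerivAt hv₂.hasDerivAt
  have hsplit : phaseMomentumFlux β v = fun y =>
      2 * β * (v y ^ 3 * conj (v y)) + (2 * v y * deriv (deriv v) y - deriv v y ^ 2) := by
    funext y
    unfold phaseMomentumFlux
    ring
  rw [hsplit]
  exact (hcubic.fun_add hdispersive).deriv

theorem deriv_sq_add_deriv_phaseMomentumFlux (α β : ℂ) {u : ℝ → ℝ → ℂ} {t x : ℝ}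
    (ht : DifferentiableAt ℝ (fun s => u s x) t) (hx : DifferentiableAt ℝ (u t) x)
    (hx₁ : DifferentiableAt ℝ (deriv (u t)) x)
    (hx₂ : DifferentiableAt ℝ (deriv (deriv (u t))) x) :
    deriv (fun s => u s x ^ 2) t + deriv (phaseMomentumFlux β (u t)) x =
      2 * u t x * mkdvLHS α β u t x
        + 2 * (3 * β - α) * u t x ^ 2 * conj (u t x) * deriv (u t) x := by
  have hdensity : deriv (fun s => u s x ^ 2) t = 2 * u t x * deriv (fun s => u s x) t := by
    simpa using deriv_fun_pow ht 2
  rw [hdensity, deriv_phaseMomentumFlux β hx hx₁ hx₂, mkdvLHS]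
  ring

theorem stmt17_general (β : ℂ) {u : ℝ → ℝ → ℂ} {t x : ℝ}
    (ht : DifferentiableAt ℝ (fun s => u s x) t) (hx : DifferentiableAt ℝ (u t) x)
    (hx₁ : DifferentiableAt ℝ (deriv (u t)) x)
    (hx₂ : DifferentiableAt ℝ (deriv (deriv (u t))) x)
    (hpde : mkdvLHS (3 * β) β u t x = 0) :
    deriv (fun s => u s x ^ 2) t + deriv (phaseMomentumFlux β (u t)) x = 0 := by
  simp [deriv_sq_add_deriv_phaseMomentumFlux (3 * β) β ht hx hx₁ hx₂, hpde]

theorem differentiable_iterate_deriv_slice {𝕜 E F : Type*} [NontriviallyNormedField 𝕜]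
    [NormedAddCommGroup E] [NormedSpace 𝕜 E] [NormedAddCommGroup F] [NormedSpace 𝕜 F]
    {u : E → 𝕜 → F} (hu : ContDiff 𝕜 (⊤ : ℕ∞) (Function.uncurry u)) (t : E) (k : ℕ) :
    Differentiable 𝕜 (deriv^[k] (u t)) :=
  ((hu.comp (contDiff_prodMk_right t)).iterate_deriv k).differentiable (by simp)

/-- local conservation of the phase-covariant momentum density `T = u²`
with flux `X = 2β·u³·conj(u) − u_x² + 2·u·u_xx`, for `α = 3β`. -/
theorem stmt17 (β : ℂ) (α : ℂ) (hα : α = 3 * β)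
    (u : ℝ → ℝ → ℂ) (hu : ContDiff ℝ (⊤ : ℕ∞) (Function.uncurry u))
    (hpde : ∀ t x : ℝ, mkdvLHS α β u t x = 0) :
    ∀ t x : ℝ,
      deriv (fun s => (u s x) ^ 2) t
        + deriv (fun y =>
            2 * β * (u t y) ^ 3 * (starRingEnd ℂ) (u t y)
              - (deriv (u t) y) ^ 2
              + 2 * u t y * deriv (deriv (u t)) y) x = 0 := by
  intro t x
  have ht := (hu.comp (contDiff_prodMk_left x)).differentiable (by simp) t
  have hx (k : ℕ) := differentiable_iterate_deriv_slice hu t k x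
  exact stmt17_general β ht (hx 0) (hx 1) (hx 2) (hα ▸ hpde t x)
end

section
/- Let α ∈ ℝ and β = 0. Then for every smooth function u : ℝ×ℝ → ℂ satisfying the complex mKdV equation u_t + α·conj(u)·u·u_x + u_xxx = 0, the angular twist density T = i·( u_x·conj(u) − conj(u)_x·u ) and flux X = i·α·( conj(u)²·u·u_x − conj(u)·u²·conj(u)_x ) + i·( conj(u)·u_xxx − u·conj(u)_xxx ) + 2i·( u_x·conj(u)_xx − conj(u)_x·u_xx ) satisfy the local conservation law ∂_t T + ∂_x X = 0 at every point (t,x) ∈ ℝ×ℝ. -/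
/-- Pointwise complex conjugate of a function of two real variables. -/
noncomputable def cconj (u : ℝ → ℝ → ℂ) : ℝ → ℝ → ℂ :=
  fun t x => (starRingEnd ℂ) (u t x)

/-!
Up to the factor `i`, the angular twist density is the Wronskian `W(ū, u) = ū u_x - ū_x u` in `x`.
For any functions `u`, `v` of `(t, x)`, equality of mixed partial derivatives and the rule
`(f g' - f' g)' = f g'' - f'' g` give
`∂_t (u v_x - u_x v) - ∂_x (u v_t - u_t v + 2 (u_x v_xx - u_xx v_x))
  = 2 ((u_t + u_xxx) v_x - u_x (v_t + v_xxx))`.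
If `u` and `v` satisfy `w_t + c w_x + w_xxx = 0` with the same coefficient `c`, the right-hand side
vanishes. For `β = 0` and real `α`, both `u` and `ū` do, with `c = α|u|²`, and eliminating the time
derivatives from the flux by means of the equation gives `X`.
-/

open Function
open scoped ContDiff ComplexConjugate

section PartialDerivatives

variable {𝕜 E F : Type*} [NormedAddCommGroup E] [NormedAddCommGroup F]

section

variable [NontriviallyNormedField 𝕜] [NormedSpace 𝕜 E] [NormedSpace 𝕜 F]
  {u : 𝕜 → 𝕜 → E} {n : ℕ∞ω}

theorem contDiff_uncurry_flip (hu : ContDiff 𝕜 n (uncurry u)) :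
    ContDiff 𝕜 n (uncurry (flip u)) :=
  hu.comp (contDiff_snd.prodMk contDiff_fst)

theorem contDiff_of_uncurry (hu : ContDiff 𝕜 n (uncurry u)) (t : 𝕜) : ContDiff 𝕜 n (u t) :=
  hu.comp (contDiff_prodMk_right t)

theorem deriv_eq_fderiv_uncurry {t x : 𝕜} (hu : DifferentiableAt 𝕜 (uncurry u) (t, x)) :
    deriv (u t) x = fderiv 𝕜 (uncurry u) (t, x) (0, 1) :=
  (hu.hasFDerivAt.comp_hasDerivAt x ((hasDerivAt_const x t).prodMk (hasDerivAt_id x))).deriv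

theorem deriv_flip_eq_fderiv_uncurry {t x : 𝕜} (hu : DifferentiableAt 𝕜 (uncurry u) (t, x)) :
    deriv (flip u x) t = fderiv 𝕜 (uncurry u) (t, x) (1, 0) :=
  (hu.hasFDerivAt.comp_hasDerivAt (f := fun s => (s, x)) t
    ((hasDerivAt_id t).prodMk (hasDerivAt_const t x))).deriv

theorem hasDerivAt_fderiv_comp_apply {f : F → E} {γ : 𝕜 → F} {γ' : F} {t : 𝕜}
    (hf : DifferentiableAt 𝕜 (fderiv 𝕜 f) (γ t)) (hγ : HasDerivAt γ γ' t) (v : F) :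
    HasDerivAt (fun s => fderiv 𝕜 f (γ s) v) (fderiv 𝕜 (fderiv 𝕜 f) (γ t) γ' v) t := by
  have hcomp : HasDerivAt (fun s => fderiv 𝕜 f (γ s)) (fderiv 𝕜 (fderiv 𝕜 f) (γ t) γ') t :=
    hf.hasFDerivAt.comp_hasDerivAt t hγ
  simpa using hcomp.clm_apply (hasDerivAt_const t v)

end

variable [RCLike 𝕜] [NormedSpace 𝕜 E] {u : 𝕜 → 𝕜 → E}

theorem hasDerivAt_deriv_param (hu : ContDiff 𝕜 2 (uncurry u)) (t x : 𝕜) :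
    HasDerivAt (fun s => deriv (u s) x) (deriv (fun y => deriv (flip u y) t) x) t := by
  have hd (p : 𝕜 × 𝕜) : DifferentiableAt 𝕜 (uncurry u) p := hu.differentiable two_ne_zero p
  have hd2 : DifferentiableAt 𝕜 (fderiv 𝕜 (uncurry u)) (t, x) :=
    (hu.fderiv_right (m := 1) (by norm_num)).differentiable one_ne_zero (t, x)
  have hsymm : IsSymmSndFDerivAt 𝕜 (uncurry u) (t, x) := hu.contDiffAt.isSymmSndFDerivAt (by simp)
  have hright : HasDerivAt (fun y => fderiv 𝕜 (uncurry u) (t, y) (1, 0))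
      (fderiv 𝕜 (fderiv 𝕜 (uncurry u)) (t, x) (0, 1) (1, 0)) x :=
    hasDerivAt_fderiv_comp_apply hd2 ((hasDerivAt_const x t).prodMk (hasDerivAt_id x)) (1, 0)
  have hleft : HasDerivAt (fun s => fderiv 𝕜 (uncurry u) (s, x) (0, 1))
      (fderiv 𝕜 (fderiv 𝕜 (uncurry u)) (t, x) (1, 0) (0, 1)) t :=
    hasDerivAt_fderiv_comp_apply (γ := fun s => (s, x)) hd2
      ((hasDerivAt_id t).prodMk (hasDerivAt_const t x)) (0, 1)
  simp only [deriv_eq_fderiv_uncurry (hd _), deriv_flip_eq_fderiv_uncurry (hd _)]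
  rwa [hright.deriv, ← hsymm.eq]

theorem deriv_deriv_flip_comm (hu : ContDiff 𝕜 2 (uncurry u)) (t x : 𝕜) :
    deriv (fun s => deriv (u s) x) t = deriv (fun y => deriv (flip u y) t) x :=
  (hasDerivAt_deriv_param hu t x).deriv

end PartialDerivatives

section Wronskian

variable {𝕜 A : Type*} [NormedCommRing A]

section

variable [NontriviallyNormedField 𝕜] [NormedAlgebra 𝕜 A]

/-- The Wronskian `f g' - f' g` of two functions of one variable. -/
noncomputable def wronskian (f g : 𝕜 → A) (x : 𝕜) : A :=
  f x * deriv g x - deriv f x * g x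

/-- Left-hand side `u_t + c u_x + u_xxx` of the Airy equation with drift velocity `c`. For real `α`
the complex mKdV equation with `β = 0` is the case `c = α|u|²`. -/
noncomputable def airyLHS (c u : 𝕜 → 𝕜 → A) (t x : 𝕜) : A :=
  deriv (flip u x) t + c t x * deriv (u t) x + deriv (deriv (deriv (u t))) x

theorem hasDerivAt_wronskian {f g : 𝕜 → A} {x : 𝕜}
    (hf : DifferentiableAt 𝕜 f x) (hf' : DifferentiableAt 𝕜 (deriv f) x)
    (hg : DifferentiableAt 𝕜 g x) (hg' : DifferentiableAt 𝕜 (deriv g) x) :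
    HasDerivAt (wronskian f g) (f x * deriv (deriv g) x - deriv (deriv f) x * g x) x := by
  refine ((hf.hasDerivAt.mul hg'.hasDerivAt).sub
    (hf'.hasDerivAt.mul hg.hasDerivAt)).congr_deriv ?_
  ring

end

variable [RCLike 𝕜] [NormedAlgebra 𝕜 A] {u v : 𝕜 → 𝕜 → A}

theorem hasDerivAt_wronskian_param (hu : ContDiff 𝕜 2 (uncurry u)) (hv : ContDiff 𝕜 2 (uncurry v))
    (t x : 𝕜) :
    HasDerivAt (fun s => wronskian (u s) (v s) x)
      (deriv (flip u x) t * deriv (v t) x + u t x * deriv (fun s => deriv (v s) x) t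
        - (deriv (fun s => deriv (u s) x) t * v t x + deriv (u t) x * deriv (flip v x) t)) t := by
  have hasDerivAt_flip {w : 𝕜 → 𝕜 → A} (hw : ContDiff 𝕜 2 (uncurry w)) :
      HasDerivAt (flip w x) (deriv (flip w x) t) t :=
    ((contDiff_of_uncurry (contDiff_uncurry_flip hw) x).differentiable two_ne_zero t).hasDerivAt
  have hasDerivAt_deriv {w : 𝕜 → 𝕜 → A} (hw : ContDiff 𝕜 2 (uncurry w)) :
      HasDerivAt (fun s => deriv (w s) x) (deriv (fun s => deriv (w s) x) t) t :=
    (hasDerivAt_deriv_param hw t x).differentiableAt.hasDerivAt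
  exact ((hasDerivAt_flip hu).mul (hasDerivAt_deriv hv)).sub
    ((hasDerivAt_deriv hu).mul (hasDerivAt_flip hv))

theorem deriv_wronskian_sub_deriv_wronskian_flip (hu : ContDiff 𝕜 2 (uncurry u))
    (hv : ContDiff 𝕜 2 (uncurry v)) (t x : 𝕜) :
    deriv (fun s => wronskian (u s) (v s) x) t
        - deriv (fun y => wronskian (flip u y) (flip v y) t) x
      = 2 * (deriv (flip u x) t * deriv (v t) x - deriv (u t) x * deriv (flip v x) t) := by
  rw [(hasDerivAt_wronskian_param hu hv t x).deriv,
    (hasDerivAt_wronskian_param (contDiff_uncurry_flip hu) (contDiff_uncurry_flip hv) x t).deriv,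
    deriv_deriv_flip_comm hu, deriv_deriv_flip_comm hv]
  simp only [flip_def]
  ring

-- The drift contributions `c u_x v_x` of the two products on the right cancel.
theorem deriv_wronskian_sub_deriv_flux_eq_airyLHS (hu : ContDiff 𝕜 3 (uncurry u))
    (hv : ContDiff 𝕜 3 (uncurry v)) (c : 𝕜 → 𝕜 → A) (t x : 𝕜) :
    deriv (fun s => wronskian (u s) (v s) x) t
        - deriv (fun y => wronskian (flip u y) (flip v y) t
            + 2 * wronskian (deriv (u t)) (deriv (v t)) y) x
      = 2 * (airyLHS c u t x * deriv (v t) x - deriv (u t) x * airyLHS c v t x) := by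
  have hu2 : ContDiff 𝕜 2 (uncurry u) := hu.of_le (by norm_num)
  have hv2 : ContDiff 𝕜 2 (uncurry v) := hv.of_le (by norm_num)
  have htime : DifferentiableAt 𝕜 (fun y => wronskian (flip u y) (flip v y) t) x :=
    (hasDerivAt_wronskian_param (contDiff_uncurry_flip hu2) (contDiff_uncurry_flip hv2)
      x t).differentiableAt
  have hdiff {w : 𝕜 → 𝕜 → A} (hw : ContDiff 𝕜 3 (uncurry w)) :
      DifferentiableAt 𝕜 (deriv (w t)) x ∧ DifferentiableAt 𝕜 (deriv (deriv (w t))) x := by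
    have hw' : ContDiff 𝕜 2 (deriv (w t)) := (contDiff_of_uncurry hw t).deriv' (n := 2)
    exact ⟨hw'.differentiable two_ne_zero x,
      (hw'.deriv' (n := 1)).differentiable one_ne_zero x⟩
  have hspace := hasDerivAt_wronskian (hdiff hu).1 (hdiff hu).2 (hdiff hv).1 (hdiff hv).2
  rw [(htime.hasDerivAt.fun_add (hspace.const_mul 2)).deriv, ← sub_sub,
    deriv_wronskian_sub_deriv_wronskian_flip hu2 hv2, airyLHS, airyLHS]
  ring

end Wronskian

section AngularTwist

variable {u : ℝ → ℝ → ℂ}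

theorem contDiff_uncurry_cconj {n : ℕ∞ω} (hu : ContDiff ℝ n (uncurry u)) :
    ContDiff ℝ n (uncurry (cconj u)) :=
  Complex.conjCLE.contDiff.comp hu

theorem deriv_conj (f : ℝ → ℂ) : deriv (fun x => conj (f x)) = fun x => conj (deriv f x) :=
  deriv.star'

theorem airyLHS_cconj (c : ℝ → ℝ → ℝ) (u : ℝ → ℝ → ℂ) (t x : ℝ) :
    airyLHS (fun t x => (c t x : ℂ)) (cconj u) t x
      = conj (airyLHS (fun t x => (c t x : ℂ)) u t x) := by
  have hright : cconj u t = fun y => conj (u t y) := rfl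
  have hleft : flip (cconj u) x = fun s => conj (flip u x s) := rfl
  simp only [airyLHS, hright, hleft, deriv_conj, map_add, map_mul, Complex.conj_ofReal]

theorem mkdvLHS_ofReal_zero (α : ℝ) (u : ℝ → ℝ → ℂ) (t x : ℝ) :
    mkdvLHS α 0 u t x = airyLHS (fun t x => ((α * Complex.normSq (u t x) : ℝ) : ℂ)) u t x := by
  simp only [mkdvLHS, airyLHS, flip_def, Complex.ofReal_mul, Complex.normSq_eq_conj_mul_self]
  ring

/-- The angular twist density `i (u_x ū - ū_x u)`. -/
noncomputable def twistDensity (u : ℝ → ℝ → ℂ) (t x : ℝ) : ℂ :=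
  Complex.I * (deriv (u t) x * cconj u t x - deriv (cconj u t) x * u t x)

/-- The flux of the angular twist density for the Airy equation with real drift velocity `c`: the
drift transports the twist, and the two other terms come from the dispersion `u_xxx`. -/
noncomputable def twistFlux (c : ℝ → ℝ → ℝ) (u : ℝ → ℝ → ℂ) (t x : ℝ) : ℂ :=
  c t x * twistDensity u t x
    + Complex.I * (cconj u t x * deriv (deriv (deriv (u t))) x
        - u t x * deriv (deriv (deriv (cconj u t))) x)
    + 2 * Complex.I * (deriv (u t) x * deriv (deriv (cconj u t)) x
        - deriv (cconj u t) x * deriv (deriv (u t)) x)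

theorem twistDensity_eq_wronskian (u : ℝ → ℝ → ℂ) (t x : ℝ) :
    twistDensity u t x = Complex.I * wronskian (cconj u t) (u t) x := by
  rw [twistDensity, wronskian]
  ring

theorem twistFlux_eq_wronskian {c : ℝ → ℝ → ℝ} {t x : ℝ}
    (hairy : airyLHS (fun t x => (c t x : ℂ)) u t x = 0) :
    twistFlux c u t x = -Complex.I * (wronskian (flip (cconj u) x) (flip u x) t
      + 2 * wronskian (deriv (cconj u t)) (deriv (u t)) x) := by
  have hconj : airyLHS (fun t x => (c t x : ℂ)) (cconj u) t x = 0 := by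
    rw [airyLHS_cconj, hairy, map_zero]
  rw [airyLHS] at hairy hconj
  simp only [twistFlux, twistDensity, wronskian, flip_def] at hairy hconj ⊢
  linear_combination Complex.I * (cconj u t x * hairy - u t x * hconj)

theorem twistFlux_mul_normSq (α : ℝ) (u : ℝ → ℝ → ℂ) (t x : ℝ) :
    twistFlux (fun t x => α * Complex.normSq (u t x)) u t x
      = Complex.I * (α : ℂ) *
            ((cconj u t x) ^ 2 * u t x * deriv (u t) x
              - cconj u t x * (u t x) ^ 2 * deriv (cconj u t) x)
          + Complex.I * (cconj u t x * deriv (deriv (deriv (u t))) x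
              - u t x * deriv (deriv (deriv (cconj u t))) x)
          + 2 * Complex.I * (deriv (u t) x * deriv (deriv (cconj u t)) x
              - deriv (cconj u t) x * deriv (deriv (u t)) x) := by
  have hnormSq : (Complex.normSq (u t x) : ℂ) = cconj u t x * u t x :=
    Complex.normSq_eq_conj_mul_self
  rw [twistFlux, twistDensity, Complex.ofReal_mul, hnormSq]
  ring

theorem stmt18_general {c : ℝ → ℝ → ℝ} (hu : ContDiff ℝ 3 (uncurry u))
    (hairy : ∀ t x, airyLHS (fun t x => (c t x : ℂ)) u t x = 0) (t x : ℝ) :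
    deriv (fun s => twistDensity u s x) t + deriv (fun y => twistFlux c u t y) x = 0 := by
  have hconj : airyLHS (fun t x => (c t x : ℂ)) (cconj u) t x = 0 := by
    rw [airyLHS_cconj, hairy, map_zero]
  have hbalance := deriv_wronskian_sub_deriv_flux_eq_airyLHS (contDiff_uncurry_cconj hu) hu
    (fun t x => (c t x : ℂ)) t x
  simp only [hconj, hairy, zero_mul, mul_zero, sub_zero] at hbalance
  simp only [twistDensity_eq_wronskian, twistFlux_eq_wronskian (hairy t _),
    deriv_const_mul_field]
  linear_combination Complex.I * hbalance

end AngularTwist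

/-- local conservation of the angular twist density
`T = i(u_x·conj(u) − conj(u)_x·u)` with the stated flux, for `α` real and `β = 0`. -/
theorem stmt18 (α : ℝ)
    (u : ℝ → ℝ → ℂ) (hu : ContDiff ℝ (⊤ : ℕ∞) (Function.uncurry u))
    (hpde : ∀ t x : ℝ, mkdvLHS (α : ℂ) 0 u t x = 0) :
    ∀ t x : ℝ,
      deriv (fun s : ℝ =>
          Complex.I * (deriv (u s) x * cconj u s x - deriv (cconj u s) x * u s x)) t
        + deriv (fun y : ℝ =>
            Complex.I * (α : ℂ) *
                ((cconj u t y) ^ 2 * u t y * deriv (u t) y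
                  - cconj u t y * (u t y) ^ 2 * deriv (cconj u t) y)
              + Complex.I * (cconj u t y * deriv (deriv (deriv (u t))) y
                  - u t y * deriv (deriv (deriv (cconj u t))) y)
              + 2 * Complex.I * (deriv (u t) y * deriv (deriv (cconj u t)) y
                  - deriv (cconj u t) y * deriv (deriv (u t)) y)) x = 0 := by
  simpa only [twistDensity, twistFlux_mul_normSq] using stmt18_general (contDiff_infty.1 hu 3)
    fun t x => (mkdvLHS_ofReal_zero α u t x).symm.trans (hpde t x)
end
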